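/- Let (G,c) be an n-vertex edge-minimal edge-colored graph with no rainbow ℓ-cycle for a fixed ℓ ≥ 3, with δ^c(G) ≥ (n+1)/2 and n ≥ 78ℓ. Let (z,ζ) achieve the replication number R, let X ⊆ N(z) with |X| = δ^c(G) − 1 such that the colors c({x,z}) are distinct and all different from ζ over x ∈ X, and suppose G[X] contains an edge e₀ with c(e₀) ≠ ζ. Then R ≤ 12ℓ. -/

import Mathlib

open Finset

variable {V : Type*}

/-- Number of distinct colors on edges incident to `v`. -/
noncomputable def colorDeg (G : SimpleGraph V) (c : Sym2 V → ℕ) (v : V) : ℕ :=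
  Set.ncard {α : ℕ | ∃ u, G.Adj u v ∧ c s(u, v) = α}

/-- Number of distinct colors `c({u,v})` over `u ∈ N(v) ∩ U`. -/
noncomputable def colorDegOn (G : SimpleGraph V) (c : Sym2 V → ℕ) (v : V) (U : Set V) : ℕ :=
  Set.ncard {α : ℕ | ∃ u ∈ U, G.Adj u v ∧ c s(u, v) = α}

/-- Minimum color-degree `δ^c(G)`. -/
noncomputable def minColorDeg (G : SimpleGraph V) (c : Sym2 V → ℕ) : ℕ :=
  ⨅ v : V, colorDeg G c v

/-- `(G,c)` is edge-minimal: no proper spanning subgraph has the same minimum color-degree. -/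
def EdgeMinimal (G : SimpleGraph V) (c : Sym2 V → ℕ) : Prop :=
  ∀ H : SimpleGraph V, H ≤ G → H ≠ G → minColorDeg H c ≠ minColorDeg G c

/-- `(G,c)` contains a rainbow cycle on `ℓ` vertices. -/
def HasRainbowCycle (G : SimpleGraph V) (c : Sym2 V → ℕ) (ℓ : ℕ) : Prop :=
  ∃ (u : V) (p : G.Walk u u), p.IsCycle ∧ p.length = ℓ ∧ (p.edges.map c).Nodup

/-- There is a rainbow path from `v` to `y` on `k` vertices whose edge colors avoid `C`. -/
def RainbowPathAvoiding (G : SimpleGraph V) (c : Sym2 V → ℕ) (v y : V) (k : ℕ)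
    (C : Set ℕ) : Prop :=
  ∃ p : G.Walk v y, p.IsPath ∧ p.length + 1 = k ∧ (p.edges.map c).Nodup ∧
    ∀ e ∈ p.edges, c e ∉ C

/-- `σ_{v,X}(y)`: the number of colors `X`-separating `y` from `v`. -/
noncomputable def sepCount (G : SimpleGraph V) (c : Sym2 V → ℕ) (v : V) (X : Set V)
    (y : V) : ℕ :=
  Set.ncard {α : ℕ | ∃ x ∈ X, G.Adj x y ∧ c s(x, y) = α ∧ c s(v, x) ≠ α}

/-- `ρ_{v,X}(y)`: the number of colors restricted for `y` by `(v,X)`. -/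
noncomputable def restrCount (G : SimpleGraph V) (c : Sym2 V → ℕ) (v : V) (X : Set V)
    (y : V) : ℕ :=
  Set.ncard {α : ℕ | (∃ x ∈ X, G.Adj x y ∧ c s(x, y) = α ∧ c s(v, x) ≠ α) ∧
    ∀ w, G.Adj w y → w ∉ X → c s(w, y) ≠ α}

/-- The replication number `R(G,c) = max_{v,α} |N_α(v)|`. -/
noncomputable def repNum (G : SimpleGraph V) (c : Sym2 V → ℕ) : ℕ :=
  ⨆ v : V, ⨆ α : ℕ, Set.ncard {u : V | G.Adj u v ∧ c s(u, v) = α}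

/-- `N_!(v)`: neighbors `u` of `v` whose color `c({u,v})` appears on exactly one edge at `v`. -/
def bangNbhd (G : SimpleGraph V) (c : Sym2 V → ℕ) (v : V) : Set V :=
  {u : V | G.Adj u v ∧ Set.ncard {w : V | G.Adj w v ∧ c s(w, v) = c s(u, v)} = 1}

namespace RB

/-- colors along a list of vertices -/
def cl (c : Sym2 V → ℕ) : List V → List ℕ
  | [] => []
  | [_] => []
  | v :: u :: q => c s(v, u) :: cl c (u :: q)

theorem cl_cons_cons (c : Sym2 V → ℕ) (v u : V) (q : List V) :
    cl c (v :: u :: q) = c s(v, u) :: cl c (u :: q) := rfl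

theorem cl_length (c : Sym2 V → ℕ) : ∀ (p : List V), (cl c p).length = p.length - 1
  | [] => rfl
  | [_] => rfl
  | v :: u :: q => by
      rw [cl_cons_cons, List.length_cons, cl_length c (u :: q)]; simp

theorem cl_concat (c : Sym2 V → ℕ) (w u : V) : ∀ (q : List V),
    cl c ((q ++ [w]) ++ [u]) = cl c (q ++ [w]) ++ [c s(w, u)]
  | [] => rfl
  | [v] => rfl
  | v :: v' :: q => by
      have := cl_concat c w u (v' :: q)
      simp only [List.cons_append, cl_cons_cons] at this ⊢
      rw [this]

theorem cl_suffix (c : Sym2 V → ℕ) (t : List V) : ∀ (s : List V), (cl c t).Sublist (cl c (s ++ t))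
  | [] => List.Sublist.refl _
  | [v] => by
      cases t with
      | nil => simp [cl]
      | cons a t => simp [cl]
  | v :: v' :: s => by
      have := cl_suffix c t (v' :: s)
      simp only [List.cons_append, cl_cons_cons] at this ⊢
      exact this.cons _

structure SP (G : SimpleGraph V) (c : Sym2 V → ℕ) (z : V) (ζ : ℕ) (X : Finset V)
    (p : List V) : Prop where
  chain : p.IsChain G.Adj
  nodup : p.Nodup
  hz : z ∉ p
  cnodup : (cl c p).Nodup
  hζ : ζ ∉ cl c p
  suf : ∀ s v t, p = s ++ v :: t → v ∈ X → c s(z, v) ∉ cl c (v :: t)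

variable {G : SimpleGraph V} {c : Sym2 V → ℕ} {z : V} {ζ : ℕ} {X : Finset V}

theorem SP.suffix {s t : List V} (h : SP G c z ζ X (s ++ t)) : SP G c z ζ X t where
  chain := (List.isChain_append.1 h.chain).2.1
  nodup := h.nodup.of_append_right
  hz := fun hh => h.hz (List.mem_append_right _ hh)
  cnodup := h.cnodup.sublist (cl_suffix c t s)
  hζ := fun hh => h.hζ ((cl_suffix c t s).subset hh)
  suf := by
    intro s' v t' e hv
    exact h.suf (s ++ s') v t' (by rw [e, List.append_assoc]) hv

theorem SP.tail {v : V} {t : List V} (h : SP G c z ζ X (v :: t)) : SP G c z ζ X t :=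
  SP.suffix (s := [v]) h

theorem SP.concat {q : List V} {w u : V} (h : SP G c z ζ X (q ++ [w])) (hu : u ∉ q ++ [w])
    (huz : u ≠ z) (ha : G.Adj w u) (hζ : c s(w, u) ≠ ζ) (hc : c s(w, u) ∉ cl c (q ++ [w]))
    (hx : ∀ v ∈ q ++ [w], v ∈ X → c s(z, v) ≠ c s(w, u)) :
    SP G c z ζ X ((q ++ [w]) ++ [u]) where
  chain := by
    rw [List.isChain_append]
    refine ⟨h.chain, by simp, ?_⟩
    intro a ha' b hb
    simp at ha' hb
    subst ha' hb
    exact ha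
  nodup := by
    rw [List.nodup_append]
    refine ⟨h.nodup, by simp, ?_⟩
    intro a ha' b hb
    simp only [List.mem_singleton] at hb
    subst hb
    rintro rfl
    exact hu ha'
  hz := by
    intro hh
    rcases List.mem_append.1 hh with hh | hh
    · exact h.hz hh
    · simp only [List.mem_singleton] at hh
      exact huz hh.symm
  cnodup := by
    rw [cl_concat, List.nodup_append]
    refine ⟨h.cnodup, by simp, ?_⟩
    intro a ha' b hb
    simp only [List.mem_singleton] at hb
    subst hb
    rintro rfl
    exact hc ha'
  hζ := by
    rw [cl_concat]
    intro hh
    rcases List.mem_append.1 hh with hh | hh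
    · exact h.hζ hh
    · simp only [List.mem_singleton] at hh
      exact hζ hh.symm
  suf := by
    intro s v t e hv
    rcases List.eq_nil_or_concat t with rfl | ⟨t', b, rfl⟩
    · simp [cl]
    · have e' : (q ++ [w]) ++ [u] = (s ++ v :: t') ++ [b] := by
        rw [e]; simp
      obtain ⟨e1, e2⟩ := List.append_inj' e' rfl
      simp only [List.cons.injEq, and_true] at e2
      subst e2
      rcases List.eq_nil_or_concat (v :: t') with h0 | ⟨t'', b', h0⟩
      · simp at h0
      · have hlast : b' = w := by
          rw [h0, List.concat_eq_append, ← List.append_assoc] at e1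
          have := (List.append_inj' e1 rfl).2
          simpa using this.symm
        subst hlast
        have h1 : v :: (t'.concat u) = (t'' ++ [b']) ++ [u] := by
          rw [← List.concat_eq_append (a := b'), ← h0]; simp
        rw [h1, cl_concat, ← List.concat_eq_append (a := b'), ← h0]
        intro hh
        rcases List.mem_append.1 hh with hh | hh
        · exact h.suf s v t' e1 hv hh
        · simp only [List.mem_singleton] at hh
          exact hx v (by rw [e1]; simp) hv hh

theorem walk_of_list : ∀ (t : List V) (v w : V), (v :: t).IsChain G.Adj →
    (v :: t).getLast? = some w →
    ∃ W : G.Walk v w, W.support = v :: t ∧ W.edges.map c = cl c (v :: t)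
  | [], v, w, _, hl => by
      simp at hl
      subst hl
      exact ⟨SimpleGraph.Walk.nil, by simp, by simp [cl]⟩
  | u :: t, v, w, hc, hl => by
      rw [List.isChain_cons_cons] at hc
      obtain ⟨W, h1, h2⟩ := walk_of_list t u w hc.2 (by simpa [List.getLast?_cons_cons] using hl)
      exact ⟨SimpleGraph.Walk.cons hc.1 W, by simp [h1], by simp [h2, cl_cons_cons]⟩

theorem cycle_of_SP {ℓ : ℕ} {v u w : V} {t q : List V} (h : SP G c z ζ X (v :: t))
    (hv : v ∈ X) (hzv : G.Adj z v) (he : v :: t = q ++ [w]) (hlen : (v :: t).length + 2 = ℓ)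
    (hu : u ∉ v :: t) (huz : u ≠ z) (hwu : G.Adj w u) (hzu : G.Adj z u)
    (h1 : c s(w, u) ∉ c s(z, v) :: cl c (v :: t)) (h2 : c s(z, u) ∉ c s(z, v) :: cl c (v :: t))
    (h3 : c s(w, u) ≠ c s(z, u)) : HasRainbowCycle G c ℓ := by
  obtain ⟨W, hW1, hW2⟩ := walk_of_list (c := c) t v w h.chain (by rw [he]; simp)
  refine ⟨u, SimpleGraph.Walk.cons hzu.symm ((SimpleGraph.Walk.cons hzv W).concat hwu), ?_, ?_, ?_⟩
  · rw [SimpleGraph.Walk.cons_isCycle_iff]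
    constructor
    · rw [SimpleGraph.Walk.isPath_def, SimpleGraph.Walk.support_concat,
        SimpleGraph.Walk.support_cons, hW1]
      have hn := h.nodup
      have hz := h.hz
      rw [List.nodup_append]
      refine ⟨List.nodup_cons.2 ⟨hz, hn⟩, by simp, ?_⟩
      intro a ha b hb
      simp only [List.mem_singleton] at hb
      subst hb
      rintro rfl
      rcases List.mem_cons.1 ha with ha | ha
      · exact huz ha
      · exact hu ha
    · intro hm
      have : c s(u, z) ∈ (((SimpleGraph.Walk.cons hzv W).concat hwu).edges.map c) :=
        List.mem_map_of_mem hm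
      rw [SimpleGraph.Walk.edges_concat, SimpleGraph.Walk.edges_cons] at this
      simp only [List.concat_eq_append, List.map_append, List.map_cons, hW2, List.map_nil] at this
      rw [Sym2.eq_swap (a := u)] at this
      rcases List.mem_append.1 this with hh | hh
      · exact h2 hh
      · simp only [List.mem_singleton] at hh
        exact h3 hh.symm
  · have := congrArg List.length hW1
    rw [SimpleGraph.Walk.length_support] at this
    simp only [SimpleGraph.Walk.length_cons, SimpleGraph.Walk.length_concat]
    omega
  · rw [SimpleGraph.Walk.edges_cons, SimpleGraph.Walk.edges_concat, SimpleGraph.Walk.edges_cons]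
    simp only [List.concat_eq_append, List.map_append, List.map_cons, hW2, List.map_nil]
    have hs := h.suf [] v t rfl hv
    have hcn := h.cnodup
    rw [Sym2.eq_swap (a := u)]
    rw [List.nodup_cons, List.nodup_append]
    refine ⟨?_, List.nodup_cons.2 ⟨hs, hcn⟩, by simp, ?_⟩
    · intro hh
      rcases List.mem_append.1 hh with hh | hh
      · exact h2 hh
      · simp only [List.mem_singleton] at hh
        exact h3 hh.symm
    · intro a ha b hb
      simp only [List.mem_singleton] at hb
      subst hb
      rintro rfl
      exact h1 ha


/-- The set `Y` of remaining vertices. -/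
def Yp (G : SimpleGraph V) (c : Sym2 V → ℕ) (z : V) (ζ : ℕ) (X : Finset V) (y : V) : Prop :=
  y ≠ z ∧ y ∉ X ∧ ¬ (G.Adj z y ∧ c s(z, y) = ζ)

open Classical in
structure Ctx [Fintype V] (ℓ : ℕ) (G : SimpleGraph V) (c : Sym2 V → ℕ) (z : V) (ζ : ℕ)
    (X : Finset V) (R δ n : ℕ) : Prop where
  hl : 3 ≤ ℓ
  hno : ¬ HasRainbowCycle G c ℓ
  star : ∀ u, G.Adj z u → c s(z, u) = ζ → ∀ w, w ≠ z → G.Adj w u → c s(w, u) ≠ ζ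
  deg : ∀ w, δ ≤ ((univ.filter (fun u => G.Adj w u)).image (fun u => c s(w, u))).card
  cap : ∀ x ∈ X, (univ.filter (fun w => w ≠ z ∧ G.Adj w x ∧ c s(w, x) = c s(z, x))).card + 1 ≤ R
  ycard : (univ.filter (fun y => Yp G c z ζ X y)).card + δ + R ≤ n
  nδ : n + 1 ≤ 2 * δ
  xcard : X.card + 1 = δ
  xadj : ∀ x ∈ X, G.Adj z x
  xinj : ∀ x ∈ X, ∀ y ∈ X, c s(z, x) = c s(z, y) → x = y
  xζ : ∀ x ∈ X, c s(z, x) ≠ ζ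
  hn : 78 * ℓ ≤ n
  hR : 12 * ℓ < R

/-- `x` is an out-neighbour of `w`. -/
def Arc (G : SimpleGraph V) (c : Sym2 V → ℕ) (z : V) (X : Finset V) (w x : V) : Prop :=
  x ∈ X ∧ G.Adj w x ∧ c s(w, x) = c s(z, x)

/-- arcs that extend the path `p` -/
def ArcS (G : SimpleGraph V) (c : Sym2 V → ℕ) (z : V) (X : Finset V) (p : List V) (v w x : V) :
    Prop :=
  Arc G c z X w x ∧ x ∉ p ∧ c s(z, x) ∉ c s(z, v) :: cl c p

variable [Fintype V] {ℓ R δ n : ℕ}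

open Classical in
theorem Ctx.count (K : Ctx ℓ G c z ζ X R δ n) (w : V) (S : Finset ℕ) (T : Finset V)
    (h : ∀ u, G.Adj w u → c s(w, u) ∈ S ∨ u ∈ T) : δ ≤ S.card + T.card := by
  refine (K.deg w).trans ?_
  have : ((univ.filter (fun u => G.Adj w u)).image (fun u => c s(w, u))) ⊆
      S ∪ T.image (fun u => c s(w, u)) := by
    intro a ha
    simp only [mem_image, mem_filter, mem_univ, true_and] at ha
    obtain ⟨u, hu, rfl⟩ := ha
    rcases h u hu with h | h
    · exact mem_union_left _ h
    · exact mem_union_right _ (mem_image_of_mem _ h)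
  calc _ ≤ _ := card_le_card this
    _ ≤ _ := card_union_le _ _
    _ ≤ _ := Nat.add_le_add_left card_image_le _

open Classical in
theorem Ctx.capacity (K : Ctx ℓ G c z ζ X R δ n) (S T : Finset V) (f : V → Finset V)
    (hz : z ∉ S) (hT : T ⊆ X)
    (hf : ∀ w ∈ S, ∀ x ∈ f w, x ∈ T ∧ Arc G c z X w x) :
    ∑ w ∈ S, (f w).card + T.card ≤ T.card * R := by
  have h1 : ∑ w ∈ S, (f w).card = ∑ x ∈ T, (S.filter (fun w => x ∈ f w)).card := by
    have : ∀ w ∈ S, (f w).card = (T.filter (fun x => x ∈ f w)).card := by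
      intro w hw
      congr 1
      ext x
      simp only [mem_filter]
      exact ⟨fun h => ⟨(hf w hw x h).1, h⟩, fun h => h.2⟩
    rw [sum_congr rfl this]
    exact sum_card_bipartiteAbove_eq_sum_card_bipartiteBelow (fun w x => x ∈ f w)
  rw [h1]
  have h2 : ∑ x ∈ T, ((S.filter (fun w => x ∈ f w)).card + 1) ≤ ∑ x ∈ T, R := by
    refine sum_le_sum ?_
    intro x hx
    refine le_trans ?_ (K.cap x (hT hx))
    refine Nat.add_le_add_right (card_le_card ?_) 1
    intro w hw
    simp only [mem_filter, mem_univ, true_and] at hw ⊢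
    have := (hf w hw.1 x hw.2).2
    exact ⟨fun h => hz (h ▸ hw.1), this.2.1, this.2.2⟩
  rw [sum_add_distrib] at h2
  simpa using h2

theorem Ctx.concat_arc (K : Ctx ℓ G c z ζ X R δ n) {v w x : V} {t q : List V}
    (h : SP G c z ζ X (v :: t)) (he : v :: t = q ++ [w]) (hx : ArcS G c z X (v :: t) v w x) :
    SP G c z ζ X (v :: t ++ [x]) := by
  obtain ⟨⟨hxX, ha, hc⟩, hp, hcol⟩ := hx
  rw [he] at h hp hcol ⊢
  refine h.concat hp ?_ ha ?_ ?_ ?_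
  · rintro rfl
    exact (K.xadj _ hxX).ne rfl
  · rw [hc]; exact K.xζ x hxX
  · rw [hc]; exact fun hh => hcol (List.mem_cons_of_mem _ hh)
  · intro a ha' haX
    rw [hc]
    intro hh
    exact hp (K.xinj a haX x hxX hh ▸ ha')

open Classical in
theorem Ctx.cover (K : Ctx ℓ G c z ζ X R δ n) {v w : V} {t q : List V}
    (h : SP G c z ζ X (v :: t)) (hv : v ∈ X) (he : v :: t = q ++ [w])
    (hlen : (v :: t).length + 2 = ℓ) :
    ∃ S : Finset ℕ, S.card + 5 ≤ 3 * ℓ ∧ (∀ a ∈ cl c (v :: t), a ∈ S) ∧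
      ∀ u, G.Adj w u → c s(w, u) ∈ S ∨ ArcS G c z X (v :: t) v w u ∨ Yp G c z ζ X u := by
  set pc := c s(z, v) :: cl c (v :: t) with hpc
  have hpl : pc.length + 2 = ℓ := by
    rw [hpc, List.length_cons, cl_length]
    simp only [List.length_cons] at hlen ⊢
    omega
  refine ⟨((z :: v :: t).toFinset.image (fun u => c s(w, u))) ∪ pc.toFinset ∪
    ((X.filter (fun x => c s(z, x) ∈ pc)).image (fun u => c s(w, u))), ?_, ?_, ?_⟩
  · have h1 := card_union_le (((z :: v :: t).toFinset.image (fun u => c s(w, u))) ∪ pc.toFinset)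
      ((X.filter (fun x => c s(z, x) ∈ pc)).image (fun u => c s(w, u)))
    have h2 := card_union_le ((z :: v :: t).toFinset.image (fun u => c s(w, u))) pc.toFinset
    have h3 : ((z :: v :: t).toFinset.image (fun u => c s(w, u))).card ≤ (z :: v :: t).length :=
      card_image_le.trans (List.toFinset_card_le _)
    have h4 := List.toFinset_card_le pc
    have h5 : ((X.filter (fun x => c s(z, x) ∈ pc)).image (fun u => c s(w, u))).card ≤
        pc.toFinset.card := by
      refine card_image_le.trans ?_
      refine card_le_card_of_injOn (fun x => c s(z, x)) ?_ ?_
      · intro x hx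
        simp only [coe_filter, Set.mem_ofPred_eq] at hx
        simpa using hx.2
      · intro x hx y hy hxy
        simp only [coe_filter, Set.mem_ofPred_eq] at hx hy
        exact K.xinj x hx.1 y hy.1 hxy
    simp only [List.length_cons] at h3 hlen
    omega
  · intro a ha
    refine mem_union_left _ (mem_union_right _ ?_)
    rw [List.mem_toFinset]
    exact List.mem_cons_of_mem _ ha
  · intro u hu
    by_cases hup : u ∈ z :: v :: t
    · left
      refine mem_union_left _ (mem_union_left _ ?_)
      exact mem_image_of_mem _ (List.mem_toFinset.2 hup)
    by_cases hα : c s(w, u) ∈ pc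
    · left
      exact mem_union_left _ (mem_union_right _ (List.mem_toFinset.2 hα))
    rw [List.mem_cons, not_or] at hup
    have hwz : w ≠ z := by
      rintro rfl
      exact h.hz (by rw [he]; simp)
    by_cases hX : u ∈ X
    · by_cases hβ : c s(z, u) ∈ pc
      · left
        refine mem_union_right _ (mem_image_of_mem _ ?_)
        simp only [mem_filter]
        exact ⟨hX, hβ⟩
      · right; left
        refine ⟨⟨hX, hu, ?_⟩, hup.2, hβ⟩
        by_contra hne
        exact K.hno (cycle_of_SP h hv (K.xadj v hv) he hlen hup.2 hup.1 hu (K.xadj u hX)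
          hα hβ hne)
    · right; right
      refine ⟨hup.1, hX, ?_⟩
      rintro ⟨hzu, hζ⟩
      refine K.hno (cycle_of_SP h hv (K.xadj v hv) he hlen hup.2 hup.1 hu hzu
          hα ?_ ?_)
      · rw [hζ]
        intro hh
        rcases List.mem_cons.1 hh with hh | hh
        · exact K.xζ v hv hh.symm
        · exact h.hζ hh
      · rw [hζ]
        exact K.star u hzu hζ w hwz hu

open Classical in
theorem Ctx.many (K : Ctx ℓ G c z ζ X R δ n) {v w : V} {t q : List V}
    (h : SP G c z ζ X (v :: t)) (hv : v ∈ X) (he : v :: t = q ++ [w])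
    (hlen : (v :: t).length + 2 = ℓ) :
    R ≤ (univ.filter (fun x => ArcS G c z X (v :: t) v w x)).card + 3 * ℓ := by
  obtain ⟨S, hS, -, hcov⟩ := K.cover h hv he hlen
  have h1 := K.count w S ((univ.filter (fun x => ArcS G c z X (v :: t) v w x)) ∪
    univ.filter (fun y => Yp G c z ζ X y)) (by
      intro u hu
      rcases hcov u hu with h | h | h
      · exact Or.inl h
      · right; exact mem_union_left _ (by simpa using h)
      · right; exact mem_union_right _ (by simpa using h))
  have h2 := card_union_le (univ.filter (fun x => ArcS G c z X (v :: t) v w x))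
    (univ.filter (fun y => Yp G c z ζ X y))
  have h3 := K.ycard
  have h4 := K.nδ
  omega

/-- endpoints of full paths -/
def Wd (ℓ : ℕ) (G : SimpleGraph V) (c : Sym2 V → ℕ) (z : V) (ζ : ℕ) (X : Finset V) (w : V) :
    Prop :=
  ∃ (v : V) (t q : List V), SP G c z ζ X (v :: t) ∧ v ∈ X ∧ v :: t = q ++ [w] ∧
    (v :: t).length + 2 = ℓ

open Classical in
theorem Ctx.many' (K : Ctx ℓ G c z ζ X R δ n) {w : V} (hw : Wd ℓ G c z ζ X w) :
    R ≤ (univ.filter (fun x => Arc G c z X w x)).card + 3 * ℓ := by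
  obtain ⟨v, t, q, h, hv, he, hlen⟩ := hw
  refine (K.many h hv he hlen).trans (Nat.add_le_add_right (card_le_card ?_) _)
  intro x hx
  simp only [mem_filter, mem_univ, true_and] at hx ⊢
  exact hx.1

theorem Wd.ne {w : V} (hw : Wd ℓ G c z ζ X w) : w ≠ z := by
  obtain ⟨v, t, q, h, hv, he, hlen⟩ := hw
  rintro rfl
  exact h.hz (by rw [he]; simp)

open Classical in
theorem Ctx.wbound (K : Ctx ℓ G c z ζ X R δ n) (S : Finset V) (hS : ∀ w ∈ S, Wd ℓ G c z ζ X w) :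
    S.card * 3 ≤ X.card * 4 := by
  have h1 := K.capacity S X (fun w => univ.filter (fun x => Arc G c z X w x))
    (fun hz => (hS z hz).ne rfl) (Subset.refl _) (by
      intro w hw x hx
      simp only [mem_filter, mem_univ, true_and] at hx
      exact ⟨hx.1, hx⟩)
  have h2 : S.card * (R - 3 * ℓ) ≤ ∑ w ∈ S, (univ.filter (fun x => Arc G c z X w x)).card := by
    rw [← smul_eq_mul]
    refine card_nsmul_le_sum _ _ _ ?_
    intro w hw
    have := K.many' (hS w hw)
    omega
  have hR := K.hR
  obtain ⟨k, hk⟩ : ∃ k, R = k + 3 * ℓ := ⟨R - 3 * ℓ, by omega⟩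
  have hk2 : R - 3 * ℓ = k := by omega
  rw [hk2] at h2
  have h4 : 3 * R ≤ 4 * k := by omega
  have hRpos : 0 < R := by omega
  have h5 : S.card * k ≤ X.card * R := by omega
  have : (S.card * 3) * R ≤ (X.card * 4) * R := by nlinarith
  exact Nat.le_of_mul_le_mul_right this hRpos


open Classical in
theorem ext_cover {w : V} {q : List V} (h : SP G c z ζ X (q ++ [w])) :
    ∃ S : Finset ℕ, S.card ≤ 3 * (q ++ [w]).length + 1 ∧
      ∀ u, G.Adj w u → c s(w, u) ∈ S ∨ SP G c z ζ X (q ++ [w] ++ [u]) := by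
  refine ⟨(ζ :: cl c (q ++ [w])).toFinset ∪ ((z :: (q ++ [w])).toFinset.image (fun u => c s(w, u)))
    ∪ ((q ++ [w]).toFinset.image (fun u => c s(z, u))), ?_, ?_⟩
  · have h1 := card_union_le ((ζ :: cl c (q ++ [w])).toFinset ∪
      ((z :: (q ++ [w])).toFinset.image (fun u => c s(w, u))))
      ((q ++ [w]).toFinset.image (fun u => c s(z, u)))
    have h2 := card_union_le (ζ :: cl c (q ++ [w])).toFinset
      ((z :: (q ++ [w])).toFinset.image (fun u => c s(w, u)))
    have h3 := List.toFinset_card_le (ζ :: cl c (q ++ [w]))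
    have h4 : ((z :: (q ++ [w])).toFinset.image (fun u => c s(w, u))).card ≤
      (z :: (q ++ [w])).length := card_image_le.trans (List.toFinset_card_le _)
    have h5 : ((q ++ [w]).toFinset.image (fun u => c s(z, u))).card ≤
      (q ++ [w]).length := card_image_le.trans (List.toFinset_card_le _)
    have h6 := cl_length c (q ++ [w])
    rw [List.length_cons] at h3 h4
    rw [h6] at h3
    have h7 : 0 < (q ++ [w]).length := by simp
    omega
  · intro u hu
    by_cases h1 : c s(w, u) ∈ ζ :: cl c (q ++ [w])
    · left
      exact mem_union_left _ (mem_union_left _ (List.mem_toFinset.2 h1))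
    by_cases h2 : u ∈ z :: (q ++ [w])
    · left
      exact mem_union_left _ (mem_union_right _ (mem_image_of_mem _ (List.mem_toFinset.2 h2)))
    by_cases h3 : ∃ v ∈ q ++ [w], c s(z, v) = c s(w, u)
    · left
      obtain ⟨v, hv, hvc⟩ := h3
      refine mem_union_right _ ?_
      rw [← hvc]
      exact mem_image_of_mem (fun u => c s(z, u)) (List.mem_toFinset.2 hv)
    right
    rw [List.mem_cons, not_or] at h1 h2
    push Not at h3
    exact h.concat h2.2 h2.1 hu h1.1 h1.2 (fun v hv _ => h3 v hv)

open Classical in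
theorem Ctx.stepX (K : Ctx ℓ G c z ζ X R δ n) {v₁ v₂ w : V} {t q : List V}
    (h : SP G c z ζ X (v₁ :: v₂ :: t)) (hv₁ : v₁ ∈ X) (hv₂ : v₂ ∈ X)
    (he : v₁ :: v₂ :: t = q ++ [w]) (hlen : (v₁ :: v₂ :: t).length + 3 = ℓ) :
    ∃ x ∈ X, SP G c z ζ X (v₁ :: v₂ :: t ++ [x]) := by
  by_contra hcon
  push Not at hcon
  set N := univ.filter (fun y => SP G c z ζ X (v₁ :: v₂ :: t ++ [y])) with hN
  set U := X.filter (fun x => Wd ℓ G c z ζ X x) with hU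
  have hNm : ∀ y, y ∈ N ↔ SP G c z ζ X (v₁ :: v₂ :: t ++ [y]) := by simp [hN]
  have hlen' : ∀ y : V, (v₁ :: (v₂ :: t ++ [y])).length + 2 = ℓ := by
    intro y; simp only [List.length_cons, List.length_append, List.length_nil] at hlen ⊢; omega
  have hNW : ∀ y ∈ N, Wd ℓ G c z ζ X y := by
    intro y hy
    exact ⟨v₁, v₂ :: t ++ [y], v₁ :: v₂ :: t, (hNm y).1 hy, hv₁, by simp, hlen' y⟩
  have hcard : δ ≤ 3 * (ℓ - 3) + 1 + N.card := by
    rw [he] at h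
    obtain ⟨S, hS, hcov⟩ := ext_cover h
    have := K.count w S N (by
      intro u hu
      rcases hcov u hu with h' | h'
      · exact Or.inl h'
      · right; rw [hNm, he]; exact h')
    rw [← he] at hS
    omega
  have hcap := K.capacity N U
    (fun y => univ.filter (fun x => ArcS G c z X (v₁ :: (v₂ :: t ++ [y])) v₁ y x))
    (fun hz => (hNW z hz).ne rfl) (filter_subset _ _) (by
      intro y hy x hx
      simp only [mem_filter, mem_univ, true_and] at hx
      refine ⟨?_, hx.1⟩
      rw [hU, mem_filter]
      refine ⟨hx.1.1, ?_⟩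
      have := (K.concat_arc (q := v₁ :: v₂ :: t) ((hNm y).1 hy) (by simp) hx).tail
      refine ⟨v₂, t ++ [y] ++ [x], v₂ :: t ++ [y], this, hv₂, by simp, ?_⟩
      simp only [List.length_cons, List.length_append, List.length_nil] at hlen ⊢; omega)
  have hsum : N.card * (R - 3 * ℓ) ≤ ∑ y ∈ N,
      (univ.filter (fun x => ArcS G c z X (v₁ :: (v₂ :: t ++ [y])) v₁ y x)).card := by
    rw [← smul_eq_mul]
    refine card_nsmul_le_sum _ _ _ ?_
    intro y hy
    have : R ≤ (univ.filter (fun x => ArcS G c z X (v₁ :: (v₂ :: t ++ [y])) v₁ y x)).card + 3 * ℓ :=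
      K.many (w := y) (q := v₁ :: v₂ :: t) ((hNm y).1 hy) hv₁ (by simp) (hlen' y)
    omega
  have hw := K.wbound (N ∪ U) (by
    intro w hw
    rcases mem_union.1 hw with hw | hw
    · exact hNW w hw
    · exact (mem_filter.1 hw).2)
  rw [card_union_of_disjoint (by
    rw [disjoint_left]
    intro y hy hy'
    exact hcon y (mem_filter.1 hy').1 ((hNm y).1 hy))] at hw
  have hR := K.hR
  obtain ⟨k, hk⟩ : ∃ k, R = k + 3 * ℓ := ⟨R - 3 * ℓ, by omega⟩
  have hk2 : R - 3 * ℓ = k := by omega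
  rw [hk2] at hsum
  have h4 : 3 * R ≤ 4 * k := by omega
  have hRpos : 0 < R := by omega
  have h5 : N.card * k ≤ U.card * R := by omega
  have h6 : N.card * 3 ≤ U.card * 4 := by
    have : (N.card * 3) * R ≤ (U.card * 4) * R := by nlinarith
    exact Nat.le_of_mul_le_mul_right this hRpos
  have := K.xcard
  have := K.nδ
  have := K.hn
  have := K.hl
  omega

open Classical in
theorem Ctx.shift (K : Ctx ℓ G c z ζ X R δ n) (r : List V) : ∀ (s t : List V) (x : V),
    (∀ a ∈ s, a ∈ X) → (∀ a ∈ t ++ [x], a ∈ X) → SP G c z ζ X (s ++ r ++ (t ++ [x])) →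
    (s ++ r ++ (t ++ [x])).length + 2 = ℓ →
    ∃ t', (∀ a ∈ t', a ∈ X) ∧ SP G c z ζ X t' ∧ t'.length = s.length + (t.length + 1)
  | [], t, x, _, ht, h, _ => ⟨t ++ [x], ht, h.suffix, by simp⟩
  | v :: s, t, x, hs, ht, h, hlen => by
      have h' : SP G c z ζ X (v :: (s ++ r ++ (t ++ [x]))) := by simpa using h
      have hlen' : (v :: (s ++ r ++ (t ++ [x]))).length + 2 = ℓ := by simpa using hlen
      have hv := hs v (by simp)
      have he : v :: (s ++ r ++ (t ++ [x])) = (v :: (s ++ r ++ t)) ++ [x] := by simp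
      have hm := K.many h' hv he hlen'
      have hR := K.hR
      have hpos : 0 < (univ.filter (fun y => ArcS G c z X (v :: (s ++ r ++ (t ++ [x]))) v x y)).card := by
        omega
      obtain ⟨y, hy⟩ := card_pos.1 hpos
      simp only [mem_filter, mem_univ, true_and] at hy
      have h2 := (K.concat_arc h' he hy).tail
      obtain ⟨t', h3, h4, h5⟩ := K.shift r s (t ++ [x]) y (fun a ha => hs a (by simp [ha])) (by
          intro a ha
          rcases List.mem_append.1 ha with ha | ha
          · exact ht a ha
          · simp only [List.mem_singleton] at ha
            subst ha
            exact hy.1.1) (by simpa using h2) (by simp at hlen' ⊢; omega)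
      exact ⟨t', h3, h4, by simp at h5 ⊢; omega⟩

theorem Ctx.greedy (K : Ctx ℓ G c z ζ X R δ n) (p : List V) (hp : p ≠ [])
    (h : SP G c z ζ X p) : ∀ m, p.length + m ≤ ℓ → ∃ r : List V, r.length = m ∧ SP G c z ζ X (p ++ r)
  | 0, _ => ⟨[], rfl, by simpa using h⟩
  | m + 1, hm => by
      obtain ⟨r, hr, h1⟩ := K.greedy p hp h m (by omega)
      rcases List.eq_nil_or_concat (p ++ r) with h0 | ⟨q, w, h0⟩
      · simp [hp] at h0
      rw [List.concat_eq_append] at h0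
      rw [h0] at h1
      obtain ⟨S, hS, hcov⟩ := ext_cover h1
      by_cases hex : ∃ u, SP G c z ζ X (q ++ [w] ++ [u])
      · obtain ⟨u, hu⟩ := hex
        refine ⟨r ++ [u], by simp [hr], ?_⟩
        rw [← List.append_assoc, h0]
        exact hu
      · exfalso
        push Not at hex
        have := K.count w S ∅ (fun u hu => Or.inl ((hcov u hu).resolve_right (hex u)))
        rw [← h0] at hS
        simp only [List.length_append, card_empty] at *
        have := K.nδ
        have := K.hn
        omega

theorem Ctx.chains (K : Ctx ℓ G c z ζ X R δ n) (a b : V) (ha : a ∈ X) (hb : b ∈ X)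
    (h0 : SP G c z ζ X [a, b]) : ∀ m, m + 4 ≤ ℓ →
    ∃ p : List V, p.length = m + 2 ∧ (∀ a ∈ p, a ∈ X) ∧ SP G c z ζ X p
  | 0, _ => ⟨[a, b], rfl, by simp [ha, hb], h0⟩
  | m + 1, hm => by
      obtain ⟨p, hp, hpX, h⟩ := K.chains a b ha hb h0 m (by omega)
      obtain ⟨r, hr, h1⟩ := K.greedy p (by rintro rfl; simp at hp) h (ℓ - 3 - (m + 2)) (by omega)
      match p, hp, hpX, h, h1 with
      | v₁ :: v₂ :: t, hp, hpX, h, h1 =>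
        have hne : v₁ :: v₂ :: (t ++ r) ≠ [] := by simp
        rcases List.eq_nil_or_concat (v₁ :: v₂ :: (t ++ r)) with h0 | ⟨q, w, h0⟩
        · simp at h0
        rw [List.concat_eq_append] at h0
        obtain ⟨x, hx, h2⟩ := K.stepX (t := t ++ r) (by simpa using h1) (hpX v₁ (by simp))
          (hpX v₂ (by simp)) h0 (by
            simp only [List.length_cons, List.length_append] at hp ⊢; omega)
        obtain ⟨t', h3, h4, h5⟩ := K.shift r (v₁ :: v₂ :: t) [] x hpX (by simpa using hx)
          (by simpa using h2) (by
            simp only [List.length_cons, List.length_append, List.length_nil] at hp ⊢; omega)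
        exact ⟨t', by rw [h5, hp]; simp, h3, h4⟩


/-- endpoints of paths inside `X` -/
def Bp (ℓ : ℕ) (G : SimpleGraph V) (c : Sym2 V → ℕ) (z : V) (ζ : ℕ) (X : Finset V) (w : V) :
    Prop :=
  ∃ (v : V) (t q : List V), SP G c z ζ X (v :: t) ∧ (∀ a ∈ v :: t, a ∈ X) ∧ v :: t = q ++ [w] ∧
    (v :: t).length + 2 = ℓ

theorem Ctx.Bp_step (K : Ctx ℓ G c z ζ X R δ n) {v w x : V} {t q : List V}
    (h : SP G c z ζ X (v :: t)) (hX : ∀ a ∈ v :: t, a ∈ X) (he : v :: t = q ++ [w])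
    (hlen : (v :: t).length + 2 = ℓ) (hx : ArcS G c z X (v :: t) v w x) : Bp ℓ G c z ζ X x := by
  have h1 := (K.concat_arc h he hx).tail
  have h2 : ∀ a ∈ t ++ [x], a ∈ X := by
    intro a ha
    rcases List.mem_append.1 ha with ha | ha
    · exact hX a (List.mem_cons_of_mem _ ha)
    · simp only [List.mem_singleton] at ha
      subst ha
      exact hx.1.1
  match t with
  | [] => exact ⟨x, [], [], by simpa using h1, by simpa using h2, by simp, by simpa using hlen⟩
  | u :: t => exact ⟨u, t ++ [x], u :: t, h1, h2, by simp, by simpa using hlen⟩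

open Classical in
theorem Ctx.final (K : Ctx ℓ G c z ζ X R δ n) (hl5 : 5 ≤ ℓ) (a b : V) (ha : a ∈ X) (hb : b ∈ X)
    (h0 : SP G c z ζ X [a, b]) : False := by
  set B := X.filter (fun x => Bp ℓ G c z ζ X x) with hB
  set f : V → Finset V := fun w => B.filter (fun x => Arc G c z X w x) with hf
  have hBne : B.Nonempty := by
    obtain ⟨p, hp, hpX, h⟩ := K.chains a b ha hb h0 (ℓ - 4) (by omega)
    rcases List.eq_nil_or_concat p with rfl | ⟨q, w, he⟩
    · simp at hp
    rw [List.concat_eq_append] at he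
    refine ⟨w, ?_⟩
    rw [hB, mem_filter]
    refine ⟨hpX w (by simp [he]), ?_⟩
    match p, hp, hpX, h, he with
    | v :: t, hp, hpX, h, he => exact ⟨v, t, q, h, hpX, he, by omega⟩
  have hBf : ∀ w ∈ B, ∃ (v : V) (t q : List V), SP G c z ζ X (v :: t) ∧ (∀ a ∈ v :: t, a ∈ X) ∧
      v :: t = q ++ [w] ∧ (v :: t).length + 2 = ℓ ∧
      (univ.filter (fun x => ArcS G c z X (v :: t) v w x)) ⊆ f w := by
    intro w hw
    obtain ⟨v, t, q, h, hX, he, hlen⟩ := (mem_filter.1 hw).2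
    refine ⟨v, t, q, h, hX, he, hlen, ?_⟩
    intro x hx
    simp only [mem_filter, mem_univ, true_and] at hx
    rw [hf, mem_filter, hB, mem_filter]
    exact ⟨⟨hx.1.1, K.Bp_step h hX he hlen hx⟩, hx.1⟩
  have hBout : ∀ w ∈ B, R ≤ (f w).card + 3 * ℓ := by
    intro w hw
    obtain ⟨v, t, q, h, hX, he, hlen, hsub⟩ := hBf w hw
    have := K.many h (hX v (by simp)) he hlen
    have := card_le_card hsub
    omega
  have hBX : B ⊆ X := filter_subset _ _
  have hzB : z ∉ B := fun h => (K.xadj z (hBX h)).ne rfl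
  have hR := K.hR
  obtain ⟨k, hk⟩ : ∃ k, R = k + 3 * ℓ := ⟨R - 3 * ℓ, by omega⟩
  have hsumB : B.card * k ≤ ∑ w ∈ B, (f w).card := by
    rw [← smul_eq_mul]
    refine card_nsmul_le_sum _ _ _ ?_
    intro w hw
    have := hBout w hw
    omega
  -- a vertex of small out-degree
  have hw0 : ∃ w ∈ B, (f w).card ≤ R := by
    have hcap := K.capacity B B f hzB hBX (by
      intro w hw x hx
      exact mem_filter.1 hx)
    obtain ⟨w, hw, h⟩ := exists_le_of_sum_le hBne (f := fun w => (f w).card) (g := fun _ => R) (by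
      simp only [sum_const, smul_eq_mul]; omega)
    exact ⟨w, hw, h⟩
  -- size of B
  have hBcard : 2 * k ≤ B.card := by
    have h1 : ∑ w ∈ B, (f w).card = ∑ x ∈ B, (B.filter (fun w => Arc G c z X w x)).card :=
      sum_card_bipartiteAbove_eq_sum_card_bipartiteBelow (fun w x => Arc G c z X w x)
    have h2 : ∑ w ∈ B, ((f w).card + (B.filter (fun u => Arc G c z X u w)).card) ≤
        ∑ w ∈ B, B.card := by
      refine sum_le_sum ?_
      intro w hw
      rw [← card_union_of_disjoint]
      · exact card_le_card (union_subset (filter_subset _ _) (filter_subset _ _))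
      · rw [disjoint_left]
        intro x hx hx'
        have e1 := (mem_filter.1 hx).2
        have e2 := (mem_filter.1 hx').2
        have e3 : c s(x, w) = c s(w, x) := by rw [Sym2.eq_swap]
        have := K.xinj x e1.1 w e2.1 (by rw [← e1.2.2, ← e2.2.2, e3])
        subst this
        exact e1.2.1.ne rfl
    rw [sum_add_distrib, ← h1, sum_const, smul_eq_mul] at h2
    have h3 : B.card * (2 * k) ≤ B.card * B.card := by nlinarith
    exact Nat.le_of_mul_le_mul_left h3 (card_pos.2 hBne)
  obtain ⟨w, hwB, hwR⟩ := hw0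
  obtain ⟨v, t, q, h, hX, he, hlen, hsub⟩ := hBf w hwB
  match t, h, hX, he, hlen, hsub with
  | [], h, hX, he, hlen, hsub => simp at hlen; omega
  | [_], h, hX, he, hlen, hsub => simp at hlen; omega
  | v₂ :: v₃ :: t, h, hX, he, hlen, hsub =>
  have hv₂ := hX v₂ (by simp)
  have hv₃ := hX v₃ (by simp)
  set Y := univ.filter (fun y => y ∉ X ∧ SP G c z ζ X (v :: v₂ :: v₃ :: t ++ [y])) with hY
  have hYm : ∀ y, y ∈ Y ↔ y ∉ X ∧ SP G c z ζ X (v :: v₂ :: v₃ :: t ++ [y]) := by simp [hY]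
  have hYlen : ∀ y : V, (v₂ :: (v₃ :: t ++ [y])).length + 2 = ℓ := by
    intro y; simp only [List.length_cons, List.length_append, List.length_nil] at hlen ⊢; omega
  have hYW : ∀ y ∈ Y, Wd ℓ G c z ζ X y := by
    intro y hy
    exact ⟨v₂, v₃ :: t ++ [y], v₂ :: v₃ :: t, ((hYm y).1 hy).2.tail, hv₂, by simp, hYlen y⟩
  have hYcard : δ ≤ 4 * ℓ + R + Y.card := by
    obtain ⟨S, hS, hScl, hcov⟩ := K.cover h (hX v (by simp)) he hlen
    have hc := K.count w (S ∪ ((v :: v₂ :: v₃ :: t).toFinset.image (fun u => c s(z, u)) ∪ {ζ}))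
      (univ.filter (fun x => ArcS G c z X (v :: v₂ :: v₃ :: t) v w x) ∪ Y) (by
        intro u hu
        rcases hcov u hu with h' | h' | h'
        · left; exact mem_union_left _ h'
        · right; exact mem_union_left _ (by simpa using h')
        · by_cases e1 : c s(w, u) ∈ S
          · left; exact mem_union_left _ e1
          by_cases e2 : c s(w, u) = ζ
          · left; exact mem_union_right _ (mem_union_right _ (by simpa using e2))
          by_cases e3 : ∃ a ∈ v :: v₂ :: v₃ :: t, c s(z, a) = c s(w, u)
          · left
            obtain ⟨a, ha, hac⟩ := e3
            refine mem_union_right _ (mem_union_left _ ?_)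
            rw [← hac]
            exact mem_image_of_mem (fun u => c s(z, u)) (List.mem_toFinset.2 ha)
          push Not at e3
          right
          refine mem_union_right _ ((hYm u).2 ⟨h'.2.1, ?_⟩)
          have hnot : u ∉ v :: v₂ :: v₃ :: t := fun hh => h'.2.1 (hX u hh)
          have hncl : c s(w, u) ∉ cl c (v :: v₂ :: v₃ :: t) := fun hh => e1 (hScl _ hh)
          rw [he] at h hnot hncl e3 ⊢
          exact h.concat hnot h'.1 hu e2 hncl (fun a ha _ => e3 a ha))
    have c1 := card_union_le S ((v :: v₂ :: v₃ :: t).toFinset.image (fun u => c s(z, u)) ∪ {ζ})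
    have c2 := card_union_le ((v :: v₂ :: v₃ :: t).toFinset.image (fun u => c s(z, u))) {ζ}
    have c3 : ((v :: v₂ :: v₃ :: t).toFinset.image (fun u => c s(z, u))).card ≤
      (v :: v₂ :: v₃ :: t).length := card_image_le.trans (List.toFinset_card_le _)
    have c4 := card_union_le (univ.filter (fun x => ArcS G c z X (v :: v₂ :: v₃ :: t) v w x)) Y
    have c5 := card_le_card hsub
    rw [card_singleton] at c2
    omega
  have hBW : ∀ x ∈ B, Wd ℓ G c z ζ X x := by
    intro x hx
    obtain ⟨v, t, q, h, hX, he, hlen⟩ := (mem_filter.1 hx).2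
    exact ⟨v, t, q, h, hX v (by simp), he, hlen⟩
  set U := X.filter (fun x => Wd ℓ G c z ζ X x) with hU
  set g : V → Finset V := fun y => U.filter (fun x => Arc G c z X y x) with hg
  have hcap := K.capacity (Y ∪ B) U g (by
      intro hz
      rcases mem_union.1 hz with hz | hz
      · exact (hYW z hz).ne rfl
      · exact hzB hz) (filter_subset _ _) (by
      intro y hy x hx
      exact mem_filter.1 hx)
  have hsum : (Y ∪ B).card * k ≤ ∑ y ∈ Y ∪ B, (g y).card := by
    rw [← smul_eq_mul]
    refine card_nsmul_le_sum _ _ _ ?_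
    intro y hy
    rcases mem_union.1 hy with hy | hy
    · have hSP := ((hYm y).1 hy).2.tail
      have e1 : R ≤ (univ.filter (fun x => ArcS G c z X (v₂ :: (v₃ :: t ++ [y])) v₂ y x)).card +
          3 * ℓ := K.many (w := y) (q := v₂ :: v₃ :: t) hSP hv₂ (by simp) (hYlen y)
      have e2 : univ.filter (fun x => ArcS G c z X (v₂ :: (v₃ :: t ++ [y])) v₂ y x) ⊆ g y := by
        intro x hx
        simp only [mem_filter, mem_univ, true_and] at hx
        rw [hg, mem_filter, hU, mem_filter]
        refine ⟨⟨hx.1.1, ?_⟩, hx.1⟩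
        have := (K.concat_arc (q := v₂ :: v₃ :: t) hSP (by simp) hx).tail
        refine ⟨v₃, t ++ [y] ++ [x], v₃ :: t ++ [y], this, hv₃, by simp, ?_⟩
        simp only [List.length_cons, List.length_append, List.length_nil] at hlen ⊢; omega
      have e3 := card_le_card e2
      omega
    · have e1 := hBout y hy
      have e2 : f y ⊆ g y := by
        intro x hx
        rw [hf, mem_filter] at hx
        rw [hg, mem_filter, hU, mem_filter]
        exact ⟨⟨hBX hx.1, hBW x hx.1⟩, hx.2⟩
      have e3 := card_le_card e2
      omega
  rw [card_union_of_disjoint (by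
    rw [disjoint_left]
    intro y hy hy'
    exact ((hYm y).1 hy).1 (hBX hy'))] at hsum
  have hw := K.wbound (Y ∪ U) (by
    intro w hw
    rcases mem_union.1 hw with hw | hw
    · exact hYW w hw
    · exact (mem_filter.1 hw).2)
  rw [card_union_of_disjoint (by
    rw [disjoint_left]
    intro y hy hy'
    exact ((hYm y).1 hy).1 (mem_filter.1 hy').1)] at hw
  have h5 : (Y.card + B.card) * k ≤ U.card * R := by omega
  have x1 := K.xcard
  have x2 := K.nδ
  have x3 := K.hn
  have x4 : 39 * ℓ ≤ δ := by omega
  have hkR : 3 * R ≤ 4 * k := by omega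
  obtain ⟨d, hd⟩ : ∃ d, δ = d + 10 * ℓ := ⟨δ - 10 * ℓ, by omega⟩
  have h6 : d + R ≤ Y.card + B.card := by omega
  have h7 : (3 * d + 4 * k) * R ≤ (4 * U.card) * R := by
    have : (d + R) * k ≤ U.card * R := le_trans (Nat.mul_le_mul_right _ h6) h5
    nlinarith
  have h8 := Nat.le_of_mul_le_mul_right h7 (by omega)
  omega

open Classical in
theorem Ctx.small_sum (K : Ctx ℓ G c z ζ X R δ n) (B : Finset V) (hBX : B ⊆ X) (hne : B.Nonempty)
    (hcl : ∀ w ∈ B, ∀ x, Arc G c z X w x → x ∈ B)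
    (hlt : ∀ w ∈ B, (B.filter (fun u => Arc G c z X u w)).card <
      (univ.filter (fun x => Arc G c z X w x)).card) : False := by
  have h1 : ∑ w ∈ B, (B.filter (fun x => Arc G c z X w x)).card =
      ∑ x ∈ B, (B.filter (fun w => Arc G c z X w x)).card :=
    sum_card_bipartiteAbove_eq_sum_card_bipartiteBelow (fun w x => Arc G c z X w x)
  have h2 : ∑ x ∈ B, (B.filter (fun w => Arc G c z X w x)).card <
      ∑ w ∈ B, (B.filter (fun x => Arc G c z X w x)).card := by
    refine sum_lt_sum_of_nonempty hne ?_
    intro w hw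
    refine lt_of_lt_of_le (hlt w hw) (card_le_card ?_)
    intro x hx
    simp only [mem_filter, mem_univ, true_and] at hx ⊢
    exact ⟨hcl w hw x hx, hx⟩
  omega

open Classical in
theorem Ctx.indeg (K : Ctx ℓ G c z ζ X R δ n) (B : Finset V) (hBX : B ⊆ X) (w : V) (hw : w ∈ X) :
    (B.filter (fun u => Arc G c z X u w)).card + 1 ≤ R := by
  refine le_trans (Nat.add_le_add_right (card_le_card ?_) 1) (K.cap w hw)
  intro u hu
  simp only [mem_filter, mem_univ, true_and] at hu ⊢
  refine ⟨?_, hu.2.2.1, hu.2.2.2⟩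
  rintro rfl
  exact (K.xadj _ (hBX hu.1)).ne rfl

open Classical in
theorem Ctx.outR (K : Ctx ℓ G c z ζ X R δ n) (x : V)
    (h : ∀ u, G.Adj x u → c s(x, u) = c s(z, x) ∨ Arc G c z X x u ∨ Yp G c z ζ X u) :
    R ≤ (univ.filter (fun u => Arc G c z X x u)).card := by
  have h1 := K.count x {c s(z, x)} ((univ.filter (fun u => Arc G c z X x u)) ∪
    univ.filter (fun y => Yp G c z ζ X y)) (by
      intro u hu
      rcases h u hu with h | h | h
      · left; simpa using h
      · right; exact mem_union_left _ (by simpa using h)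
      · right; exact mem_union_right _ (by simpa using h))
  have h2 := card_union_le (univ.filter (fun u => Arc G c z X x u))
    (univ.filter (fun y => Yp G c z ζ X y))
  have h3 := K.ycard
  have h4 := K.nδ
  rw [card_singleton] at h1
  omega

theorem Ctx.SP_one (K : Ctx ℓ G c z ζ X R δ n) (x : V) (hx : x ∈ X) : SP G c z ζ X [x] where
  chain := by simp
  nodup := by simp
  hz := by
    simp only [List.mem_singleton]
    exact (K.xadj x hx).ne
  cnodup := by simp [cl]
  hζ := by simp [cl]
  suf := by
    intro s v t e hv
    cases t with
    | nil => simp [cl]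
    | cons a t =>
      have := congrArg List.length e
      simp only [List.length_append, List.length_cons, List.length_nil] at this
      omega

theorem Ctx.SP_two (K : Ctx ℓ G c z ζ X R δ n) (a b : V) (ha : a ∈ X) (hb : b ∈ X)
    (hab : G.Adj a b) (h1 : c s(a, b) ≠ ζ) (h2 : c s(z, a) ≠ c s(a, b)) : SP G c z ζ X [a, b] := by
  have := SP.concat (q := []) (w := a) (u := b) (K.SP_one a ha) (by
    simpa using hab.ne') (K.xadj b hb).ne' hab h1 (by simp [cl]) (by
      intro v hv _
      simp only [List.nil_append, List.mem_singleton] at hv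
      subst hv
      exact h2)
  simpa using this

theorem Ctx.three (K : Ctx ℓ G c z ζ X R δ n) (hl3 : ℓ = 3) (hX : X.Nonempty) : False := by
  classical
  refine K.small_sum X (Subset.refl _) hX (fun w _ x hx => hx.1) ?_
  intro x hx
  refine lt_of_lt_of_le (K.indeg X (Subset.refl _) x hx) (K.outR x ?_)
  intro u hu
  by_cases h1 : c s(x, u) = c s(z, x)
  · exact Or.inl h1
  right
  by_cases huz : u = z
  · subst huz
    exact absurd (by rw [Sym2.eq_swap]) h1
  have hx1 : u ∉ [x] := by simpa using hu.ne'
  by_cases huX : u ∈ X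
  · left
    refine ⟨huX, hu, ?_⟩
    by_contra hne
    refine K.hno (cycle_of_SP (q := []) (K.SP_one x hx) hx (K.xadj x hx) (by simp) (by simp [hl3])
      hx1 huz hu (K.xadj u huX) ?_ ?_ hne)
    · simpa [cl] using h1
    · simp only [cl, List.mem_singleton]
      intro hh
      exact hu.ne (K.xinj x hx u huX hh.symm)
  · right
    refine ⟨huz, huX, ?_⟩
    rintro ⟨hzu, hζ⟩
    refine K.hno (cycle_of_SP (q := []) (K.SP_one x hx) hx (K.xadj x hx) (by simp) (by simp [hl3])
      hx1 huz hu hzu ?_ ?_ ?_)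
    · simpa [cl] using h1
    · simp only [cl, List.mem_singleton, hζ]
      exact (K.xζ x hx).symm
    · rw [hζ]
      exact K.star u hzu hζ x (K.xadj x hx).ne' hu

open Classical in
theorem Ctx.four (K : Ctx ℓ G c z ζ X R δ n) (hl4 : ℓ = 4) (a b : V) (ha : a ∈ X) (hb : b ∈ X)
    (h0 : SP G c z ζ X [a, b]) : False := by
  have hArc : ∀ w ∈ X, ∀ x, Arc G c z X w x → SP G c z ζ X [w, x] := by
    intro w hw x hx
    refine K.SP_two w x hw hx.1 hx.2.1 ?_ ?_
    · rw [hx.2.2]; exact K.xζ x hx.1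
    · rw [hx.2.2]
      intro hh
      exact hx.2.1.ne (K.xinj w hw x hx.1 hh)
  refine K.small_sum (X.filter (fun x => ∃ w ∈ X, SP G c z ζ X [w, x])) (filter_subset _ _)
    ⟨b, mem_filter.2 ⟨hb, a, ha, h0⟩⟩ ?_ ?_
  · intro w hw x hx
    have hwX := (mem_filter.1 hw).1
    exact mem_filter.2 ⟨hx.1, w, hwX, hArc w hwX x hx⟩
  intro x hxB
  obtain ⟨hx, w₀, hw₀, hSP₀⟩ := mem_filter.1 hxB
  set I := (X.filter (fun x => ∃ w ∈ X, SP G c z ζ X [w, x])).filter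
    (fun u => Arc G c z X u x) with hI
  by_cases hc : I.card ≤ 2
  · have h1 := K.many' (w := x) ⟨w₀, [x], [w₀], hSP₀, hw₀, by simp, by simp [hl4]⟩
    have := K.hR
    omega
  push Not at hc
  refine lt_of_lt_of_le (K.indeg _ (filter_subset _ _) x hx) (K.outR x ?_)
  intro u hu
  by_cases h1 : c s(x, u) = c s(z, x)
  · exact Or.inl h1
  right
  by_cases huz : u = z
  · subst huz
    exact absurd (by rw [Sym2.eq_swap]) h1
  -- choose a good in-neighbour
  obtain ⟨w, hwX, hwA, hwu, hwc⟩ : ∃ w ∈ X, Arc G c z X w x ∧ w ≠ u ∧ c s(z, w) ≠ c s(x, u) := by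
    by_contra hcon
    push Not at hcon
    have hsub : I ⊆ {u} ∪ X.filter (fun w => c s(z, w) = c s(x, u)) := by
      intro w hw
      have hw1 := (mem_filter.1 (mem_filter.1 hw).1).1
      have hw2 := (mem_filter.1 hw).2
      by_cases e : w = u
      · exact mem_union_left _ (by simpa using e)
      · exact mem_union_right _ (mem_filter.2 ⟨hw1, hcon w hw1 hw2 e⟩)
    have h2 : (X.filter (fun w => c s(z, w) = c s(x, u))).card ≤ 1 := by
      rw [card_le_one]
      intro p hp q hq
      have hp := mem_filter.1 hp
      have hq := mem_filter.1 hq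
      exact K.xinj p hp.1 q hq.1 (hp.2.trans hq.2.symm)
    have h3 := card_le_card hsub
    have h4 := card_union_le {u} (X.filter (fun w => c s(z, w) = c s(x, u)))
    rw [card_singleton] at h4
    omega
  have hSP := hArc w hwX x hwA
  have hx1 : u ∉ [w, x] := by
    simp only [List.mem_cons, List.not_mem_nil, or_false, not_or]
    exact ⟨hwu.symm, hu.ne'⟩
  have hα : c s(x, u) ∉ c s(z, w) :: cl c [w, x] := by
    simp only [cl, List.mem_cons, List.not_mem_nil, or_false, not_or, hwA.2.2]
    exact ⟨hwc.symm, h1⟩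
  by_cases huX : u ∈ X
  · left
    refine ⟨huX, hu, ?_⟩
    by_contra hne
    refine K.hno (cycle_of_SP (q := [w]) hSP hwX (K.xadj w hwX) (by simp) (by simp [hl4])
      hx1 huz hu (K.xadj u huX) hα ?_ hne)
    simp only [cl, List.mem_cons, List.not_mem_nil, or_false, not_or, hwA.2.2]
    exact ⟨fun hh => hwu (K.xinj w hwX u huX hh.symm), fun hh => hu.ne (K.xinj x hx u huX hh.symm)⟩
  · right
    refine ⟨huz, huX, ?_⟩
    rintro ⟨hzu, hζ⟩
    refine K.hno (cycle_of_SP (q := [w]) hSP hwX (K.xadj w hwX) (by simp) (by simp [hl4])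
      hx1 huz hu hzu hα ?_ ?_)
    · simp only [cl, List.mem_cons, List.not_mem_nil, or_false, not_or, hwA.2.2, hζ]
      exact ⟨(K.xζ w hwX).symm, (K.xζ x hx).symm⟩
    · rw [hζ]
      exact K.star u hzu hζ x (K.xadj x hx).ne' hu

theorem Ctx.absurd (K : Ctx ℓ G c z ζ X R δ n)
    (he₀ : ∃ a ∈ X, ∃ b ∈ X, G.Adj a b ∧ c s(a, b) ≠ ζ) : False := by
  obtain ⟨a, ha, b, hb, hab, hc⟩ := he₀
  obtain ⟨a, ha, b, hb, h0⟩ : ∃ a, ∃ _ : a ∈ X, ∃ b, ∃ _ : b ∈ X, SP G c z ζ X [a, b] := by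
    by_cases h : c s(z, a) = c s(a, b)
    · refine ⟨b, hb, a, ha, K.SP_two b a hb ha hab.symm ?_ ?_⟩
      · rw [Sym2.eq_swap]; exact hc
      · rw [Sym2.eq_swap (a := b) (b := a), ← h]
        intro hh
        exact hab.ne (K.xinj a ha b hb hh.symm)
    · exact ⟨a, ha, b, hb, K.SP_two a b ha hb hab hc h⟩
  have hl := K.hl
  rcases Nat.lt_or_ge ℓ 5 with h | h
  · have : ℓ = 3 ∨ ℓ = 4 := by omega
    rcases this with h | h
    · exact K.three h ⟨a, ha⟩
    · exact K.four h a b ha hb h0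
  · exact K.final h a b ha hb h0

end RB



namespace RB

theorem ncard_le_repNum [Fintype V] (G : SimpleGraph V) (c : Sym2 V → ℕ) (v : V) (α : ℕ) :
    Set.ncard {u : V | G.Adj u v ∧ c s(u, v) = α} ≤ repNum G c := by
  have hb : ∀ v α, Set.ncard {u : V | G.Adj u v ∧ c s(u, v) = α} ≤ Nat.card V := by
    intro v α
    exact Set.ncard_le_card _
  have h1 : Set.ncard {u : V | G.Adj u v ∧ c s(u, v) = α} ≤
      ⨆ α : ℕ, Set.ncard {u : V | G.Adj u v ∧ c s(u, v) = α} :=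
    le_ciSup (f := fun α : ℕ => Set.ncard {u : V | G.Adj u v ∧ c s(u, v) = α})
      ⟨Nat.card V, by rintro _ ⟨α, rfl⟩; exact hb v α⟩ α
  refine h1.trans ?_
  exact le_ciSup (f := fun v : V => ⨆ α : ℕ, Set.ncard {u : V | G.Adj u v ∧ c s(u, v) = α})
      ⟨Nat.card V, by rintro _ ⟨v, rfl⟩; exact ciSup_le (hb v)⟩ v

theorem star_of_min [Fintype V] (G : SimpleGraph V) (c : Sym2 V → ℕ) (hmin : EdgeMinimal G c)
    (z : V) (ζ : ℕ) (h2 : 1 < Set.ncard {u : V | G.Adj u z ∧ c s(u, z) = ζ}) :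
    ∀ u, G.Adj z u → c s(z, u) = ζ → ∀ w, w ≠ z → G.Adj w u → c s(w, u) ≠ ζ := by
  intro u hzu hc w hwz hwu hcw
  obtain ⟨u', hu', hne⟩ := Set.exists_ne_of_one_lt_ncard h2 u
  have hH : G.deleteEdges {s(z, u)} ≤ G := SimpleGraph.deleteEdges_le _
  refine hmin (G.deleteEdges {s(z, u)}) hH ?_ ?_
  · intro he
    have : (G.deleteEdges {s(z, u)}).Adj z u := by rw [he]; exact hzu
    simp [SimpleGraph.deleteEdges_adj] at this
  · unfold minColorDeg
    congr 1
    funext v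
    unfold colorDeg
    congr 1
    ext α
    simp only [Set.mem_setOf_eq]
    constructor
    · rintro ⟨a, ha, hα⟩
      exact ⟨a, hH ha, hα⟩
    · rintro ⟨a, ha, hα⟩
      by_cases hd : s(a, v) = s(z, u)
      · rw [hd, hc] at hα
        subst hα
        rcases Sym2.eq_iff.1 hd with ⟨rfl, rfl⟩ | ⟨rfl, rfl⟩
        · refine ⟨w, ?_, hcw⟩
          rw [SimpleGraph.deleteEdges_adj]
          refine ⟨hwu, ?_⟩
          simp only [Set.mem_singleton_iff, Sym2.eq_iff]
          rintro (⟨h, -⟩ | ⟨-, h⟩)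
          · exact hwz h
          · exact ha.ne h.symm
        · refine ⟨u', ?_, hu'.2⟩
          rw [SimpleGraph.deleteEdges_adj]
          refine ⟨hu'.1, ?_⟩
          simp only [Set.mem_singleton_iff, Sym2.eq_iff]
          rintro (⟨-, h⟩ | ⟨h, -⟩)
          · exact ha.ne h.symm
          · exact hne h
      · exact ⟨a, by rw [SimpleGraph.deleteEdges_adj]; exact ⟨ha, hd⟩, hα⟩

end RB


theorem stmt19 (ℓ : ℕ) (hl : 3 ≤ ℓ) [Fintype V] (G : SimpleGraph V) (c : Sym2 V → ℕ)
    (hmin : EdgeMinimal G c) (hno : ¬ HasRainbowCycle G c ℓ)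
    (hδ : ((Fintype.card V : ℚ) + 1) / 2 ≤ (minColorDeg G c : ℚ))
    (hn : 78 * ℓ ≤ Fintype.card V)
    (z : V) (ζ : ℕ)
    (hmaxpair : Set.ncard {u : V | G.Adj u z ∧ c s(u, z) = ζ} = repNum G c)
    (X : Finset V) (hXsub : ∀ x ∈ X, G.Adj z x)
    (hXcard : X.card = minColorDeg G c - 1)
    (hXinj : Set.InjOn (fun x => c s(x, z)) ↑X)
    (hXζ : ∀ x ∈ X, c s(x, z) ≠ ζ)
    (he₀ : ∃ a ∈ X, ∃ b ∈ X, G.Adj a b ∧ c s(a, b) ≠ ζ) :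
    repNum G c ≤ 12 * ℓ := by
  classical
  by_contra hR
  push Not at hR
  have hδ' : Fintype.card V + 1 ≤ 2 * minColorDeg G c := by
    have : ((Fintype.card V : ℚ) + 1) ≤ 2 * (minColorDeg G c : ℚ) := by linarith
    exact_mod_cast this
  have hXcard' : X.card + 1 = minColorDeg G c := by omega
  have hsw : ∀ a b : V, c s(a, b) = c s(b, a) := fun a b => by rw [Sym2.eq_swap]
  have hL : (univ.filter (fun u => G.Adj z u ∧ c s(z, u) = ζ)).card = repNum G c := by
    rw [← hmaxpair, ← Set.ncard_coe_finset]
    congr 1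
    ext u
    simp [G.adj_comm z u, hsw z u]
  refine RB.Ctx.absurd (ℓ := ℓ) (G := G) (c := c) (z := z) (ζ := ζ) (X := X) (R := repNum G c)
    (δ := minColorDeg G c) (n := Fintype.card V) ?_ he₀
  exact
    { hl := hl
      hno := hno
      star := RB.star_of_min G c hmin z ζ (by omega)
      deg := by
        intro w
        have h1 : minColorDeg G c ≤ colorDeg G c w := ciInf_le (OrderBot.bddBelow _) w
        refine h1.trans (le_of_eq ?_)
        unfold colorDeg
        rw [← Set.ncard_coe_finset]
        congr 1
        ext α
        simp [G.adj_comm w, hsw w]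
      cap := by
        intro x hx
        have hz : z ∉ univ.filter (fun w => w ≠ z ∧ G.Adj w x ∧ c s(w, x) = c s(z, x)) := by simp
        rw [← card_insert_of_notMem hz]
        refine le_trans ?_ (RB.ncard_le_repNum G c x (c s(z, x)))
        rw [← Set.ncard_coe_finset]
        refine Set.ncard_le_ncard ?_ (Set.toFinite _)
        intro w hw
        simp only [coe_insert, coe_filter, mem_univ, true_and, Set.mem_insert_iff,
          Set.mem_setOf_eq] at hw
        rcases hw with rfl | hw
        · exact ⟨hXsub x hx, rfl⟩
        · exact hw.2
      ycard := by
        have d1 : Disjoint (univ.filter (fun y => RB.Yp G c z ζ X y))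
            (univ.filter (fun u => G.Adj z u ∧ c s(z, u) = ζ)) := by
          rw [disjoint_left]
          intro y hy hy'
          exact (mem_filter.1 hy).2.2.2 (mem_filter.1 hy').2
        have d2 : Disjoint ((univ.filter (fun y => RB.Yp G c z ζ X y)) ∪
            (univ.filter (fun u => G.Adj z u ∧ c s(z, u) = ζ))) X := by
          rw [disjoint_left]
          intro y hy hy'
          rcases mem_union.1 hy with hy | hy
          · exact (mem_filter.1 hy).2.2.1 hy'
          · exact hXζ y hy' (by rw [hsw]; exact (mem_filter.1 hy).2.2)
        have hz : z ∉ ((univ.filter (fun y => RB.Yp G c z ζ X y)) ∪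
            (univ.filter (fun u => G.Adj z u ∧ c s(z, u) = ζ))) ∪ X := by
          intro h
          rcases mem_union.1 h with h | h
          · rcases mem_union.1 h with h | h
            · exact (mem_filter.1 h).2.1 rfl
            · exact (mem_filter.1 h).2.1.ne rfl
          · exact (hXsub z h).ne rfl
        have h1 := card_le_univ (insert z (((univ.filter (fun y => RB.Yp G c z ζ X y)) ∪
            (univ.filter (fun u => G.Adj z u ∧ c s(z, u) = ζ))) ∪ X))
        rw [card_insert_of_notMem hz, card_union_of_disjoint d2, card_union_of_disjoint d1, hL] at h1
        have h2 : ∀ i : DecidablePred (fun y => RB.Yp G c z ζ X y),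
          (@Finset.filter V (fun y => RB.Yp G c z ζ X y) i univ).card =
          (univ.filter (fun y => RB.Yp G c z ζ X y)).card := fun i => by congr
        omega
      nδ := hδ'
      xcard := hXcard'
      xadj := hXsub
      xinj := by
        intro x hx y hy h
        exact hXinj hx hy (by simpa only [hsw _ z] using h)
      xζ := by
        intro x hx
        rw [hsw]
        exact hXζ x hx
      hn := hn
      hR := hR }
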